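/- Let r ≥ 2 be an integer and let A be a finite-dimensional F-algebra such that x·v = 0 for every x ∈ A and every element v ∈ A that can be written as a product of r elements y_1, …, y_r of A with some placement of parentheses. Then l(A) ≤ (r − 1)·dim A. -/

import Mathlib

/-!
Framework: length of finite-dimensional not necessarily associative,
not necessarily unital algebras (non-unital convention: `L_0(S) = 0`).
The multiplication of the algebra is passed explicitly as a binary
operation `μ`, so that the same definitions apply to an algebra, to its
commutator algebra, to a Lie bracket, etc.
-/

open Submodule Module

/-- `IsWord μ S k w`: `w` is a product of `k` elements of `S` (with respect to the
multiplication `μ`) with some placement of parentheses. -/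
inductive IsWord {A : Type*} (μ : A → A → A) (S : Set A) : ℕ → A → Prop
  | base {a : A} (ha : a ∈ S) : IsWord μ S 1 a
  | mul {m n : ℕ} {a b : A} (ha : IsWord μ S m a) (hb : IsWord μ S n b) :
      IsWord μ S (m + n) (μ a b)

/-- The multiplication of an algebra, as a plain binary operation. -/
def amul (A : Type*) [Mul A] : A → A → A := fun a b => a * b

section
variable (F : Type*) {A : Type*} [Field F] [AddCommGroup A] [Module F A]

/-- `L_i(S)`: the linear span of all words in `S` of length at most `i`
(non-unital convention, so `L_0(S) = 0`). -/
def Lset (μ : A → A → A) (S : Set A) (i : ℕ) : Submodule F A :=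
  Submodule.span F {a | ∃ k, k ≤ i ∧ IsWord μ S k a}

/-- `S` generates the algebra, i.e. the span of all words in `S` is everything. -/
def Generates (μ : A → A → A) (S : Set A) : Prop :=
  Submodule.span F {a | ∃ k, IsWord μ S k a} = ⊤

/-- `l(S)`: the length of a generating set `S`, the least `k` with `L_k(S) = A`. -/
noncomputable def lenSet (μ : A → A → A) (S : Set A) : ℕ :=
  sInf {k | Lset F μ S k = ⊤}

/-- An irreducible word of length `k` in `S`. -/
def IrredWord (μ : A → A → A) (S : Set A) (k : ℕ) (w : A) : Prop :=
  IsWord μ S k w ∧ ∀ m, m < k → w ∉ Lset F μ S m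

end

section
variable {A : Type*}

/-- The set `P(x,y,z)` of monomials. -/
def Pset (μ : A → A → A) (x y z : A) : Set A :=
  {μ (μ x z) y, μ (μ z x) y, μ (μ y z) x, μ (μ z y) x,
   μ x (μ z y), μ x (μ y z), μ y (μ x z), μ y (μ z x),
   μ x y, μ y x, μ x z, μ z x, μ y z, μ z y, x, y, z}

/-- The set `Q_l(x,y,z)` of monomials. -/
def Qlset (μ : A → A → A) (x y z : A) : Set A :=
  {μ x (μ z y), μ x (μ y z), μ y (μ x z), μ y (μ z x),
   μ x y, μ y x, μ x z, μ z x, μ y z, μ z y, x, y, z}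

/-- The set `Q_r(x,y,z)` of monomials. -/
def Qrset (μ : A → A → A) (x y z : A) : Set A :=
  {μ (μ x z) y, μ (μ z x) y, μ (μ y z) x, μ (μ z y) x,
   μ x y, μ y x, μ x z, μ z x, μ y z, μ z y, x, y, z}

end

section
variable (F : Type*) {A : Type*} [Field F] [AddCommGroup A] [Module F A]

/-- A mixing algebra: `(xy)z` and `z(xy)` lie in the span of `P(x,y,z)`. -/
def IsMixing (μ : A → A → A) : Prop :=
  ∀ x y z : A, μ (μ x y) z ∈ Submodule.span F (Pset μ x y z) ∧
    μ z (μ x y) ∈ Submodule.span F (Pset μ x y z)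

/-- A sliding algebra: either `z(xy)` always lies in the span of `Q_r(x,y,z)`, or
`(xy)z` always lies in the span of `Q_l(x,y,z)`. -/
def IsSliding (μ : A → A → A) : Prop :=
  (∀ x y z : A, μ z (μ x y) ∈ Submodule.span F (Qrset μ x y z)) ∨
  (∀ x y z : A, μ (μ x y) z ∈ Submodule.span F (Qlset μ x y z))

end

theorem IsWord.pos {A : Type*} {μ : A → A → A} {S : Set A} {k : ℕ} {w : A}
    (h : IsWord μ S k w) : 1 ≤ k := by
  induction h with
  | base _ => exact le_rfl
  | mul _ _ ih₁ _ => omega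

/-- A word of length `k` is a product of any smaller positive number of elements of the
algebra: contract subwords. -/
theorem IsWord.univ_of_le {A : Type*} {μ : A → A → A} {S : Set A} {k : ℕ} {w : A}
    (h : IsWord μ S k w) {r : ℕ} (hr : 1 ≤ r) (hrk : r ≤ k) :
    IsWord μ (Set.univ : Set A) r w := by
  induction h generalizing r with
  | base _ =>
    obtain rfl : r = 1 := by omega
    exact .base (Set.mem_univ _)
  | @mul m n a b ha hb iha ihb =>
    have hm := ha.pos
    have hn := hb.pos
    obtain rfl | hr₁ : r = 1 ∨ 2 ≤ r := by omega
    · exact .base (Set.mem_univ _)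
    · obtain ⟨i, j, rfl, hi, him, hj, hjn⟩ :
          ∃ i j, r = i + j ∧ 1 ≤ i ∧ i ≤ m ∧ 1 ≤ j ∧ j ≤ n :=
        ⟨min m (r - 1), r - min m (r - 1), by omega, by omega, by omega, by omega, by omega⟩
      exact .mul (iha hi him) (ihb hj hjn)

theorem IsWord.mem_Lset {F A : Type*} [Field F] [AddCommGroup A] [Module F A]
    {μ : A → A → A} {S : Set A} {k i : ℕ} {w : A} (h : IsWord μ S k w) (hki : k ≤ i) :
    w ∈ Lset F μ S i :=
  subset_span ⟨k, hki, h⟩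

theorem Lset_mono {F A : Type*} [Field F] [AddCommGroup A] [Module F A]
    (μ : A → A → A) (S : Set A) : Monotone (Lset F μ S) :=
  fun _ _ hij => span_mono fun _ ⟨k, hk, h⟩ => ⟨k, hk.trans hij, h⟩

theorem mul_mem_Lset {F B : Type*} [Field F] [NonUnitalNonAssocRing B] [Module F B]
    [IsScalarTower F B B] {S : Set B} {i j : ℕ} {a b : B}
    (ha : a ∈ Lset F (amul B) S i) (hb : IsWord (amul B) S j b) :
    a * b ∈ Lset F (amul B) S (i + j) := by
  induction ha using span_induction with
  | mem x hx =>
    obtain ⟨k, hk, hx⟩ := hx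
    exact (hx.mul hb).mem_Lset (by omega)
  | zero => simp
  | add x y _ _ hx hy => simpa only [add_mul] using add_mem hx hy
  | smul c x _ hx => simpa only [smul_mul_assoc] using smul_mem _ c hx

/-- If right factors that are products of `r` elements annihilate, then the chain `L_i(S)`
is stationary as soon as it does not grow over `r - 1` consecutive steps. -/
theorem IsWord.mem_Lset_of_stationary {F B : Type*} [Field F] [NonUnitalNonAssocRing B]
    [Module F B] [IsScalarTower F B B] {r : ℕ} (hr : 2 ≤ r)
    (hzero : ∀ x v : B, IsWord (amul B) (Set.univ : Set B) r v → x * v = 0)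
    {S : Set B} {n : ℕ}
    (hn : Lset F (amul B) S (n + (r - 1)) ≤ Lset F (amul B) S n)
    {m : ℕ} {w : B} (hw : IsWord (amul B) S m w) : w ∈ Lset F (amul B) S n := by
  induction hw with
  | base ha => exact hn ((IsWord.base ha).mem_Lset (by omega))
  | @mul p q a b ha hb iha _ =>
    change a * b ∈ _
    by_cases hq : r ≤ q
    · rw [hzero a b (hb.univ_of_le (by omega) hq)]
      exact zero_mem _
    · exact hn (Lset_mono _ S (by omega) (mul_mem_Lset iha hb))

/-- if `r ≥ 2` and `x·v = 0` for every `x` and every `v` that is a product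
of `r` elements of the algebra (with some placement of parentheses, i.e. a word of
length `r` in the generating set consisting of all elements), then
`l(A) ≤ (r − 1)·dim A`. -/
theorem length_le_of_right_annihilating_products
    {F B : Type*} [Field F] [NonUnitalNonAssocRing B] [Module F B]
    [SMulCommClass F B B] [IsScalarTower F B B] [FiniteDimensional F B]
    (r : ℕ) (hr : 2 ≤ r)
    (hzero : ∀ x v : B, IsWord (amul B) (Set.univ : Set B) r v → x * v = 0) :
    ∀ S : Set B, S.Finite → Generates F (amul B) S →
      lenSet F (amul B) S ≤ (r - 1) * finrank F B := by
  intro S _ hS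
  have grow : ∀ t : ℕ, t ≤ finrank F (Lset F (amul B) S ((r - 1) * t)) ∨
      Lset F (amul B) S ((r - 1) * t) = ⊤ := by
    intro t
    induction t with
    | zero => exact .inl (Nat.zero_le _)
    | succ t ih =>
      have hmono : Lset F (amul B) S ((r - 1) * t) ≤ Lset F (amul B) S ((r - 1) * (t + 1)) :=
        Lset_mono _ S (Nat.mul_le_mul_left _ t.le_succ)
      obtain ih | ih := ih
      · by_cases hst : Lset F (amul B) S ((r - 1) * (t + 1)) ≤ Lset F (amul B) S ((r - 1) * t)
        · refine .inr (top_le_iff.mp (le_trans ?_ hmono))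
          rw [← (show span F _ = ⊤ from hS), span_le]
          rintro w ⟨m, hw⟩
          exact hw.mem_Lset_of_stationary hr hzero hst
        · have := finrank_lt_finrank_of_lt (lt_of_le_not_ge hmono hst)
          exact .inl (by omega)
      · exact .inr (top_le_iff.mp (ih ▸ hmono))
  refine Nat.sInf_le ?_
  obtain h | h := grow (finrank F B)
  · exact eq_top_of_finrank_eq (le_antisymm (finrank_le _) h)
  · exact h
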